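/- Let k ∈ [0,1) and let S be a weakly regular AG-groupoid with a left identity e. Then the following conditions are equivalent: (i) S is regular; (ii) f ∧_k g ≤ f ∘_k g for every (∈,∈∨q_k)-fuzzy quasi-ideal f and every (∈,∈∨q_k)-fuzzy left ideal g of S; (iii) f ∧_k g ≤ f ∘_k g for every (∈,∈∨q_k)-fuzzy bi-ideal f and every (∈,∈∨q_k)-fuzzy left ideal g of S; (iv) f ∧_k g ≤ f ∘_k g for every (∈,∈∨q_k)-fuzzy generalized bi-ideal f and every (∈,∈∨q_k)-fuzzy left ideal g of S. -/

import Mathlib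

/-- An AG-groupoid: a magma satisfying the left invertive law `(ab)c = (cb)a`. -/
def LeftInvertive (S : Type*) [Mul S] : Prop := ∀ a b c : S, a * b * c = c * b * a

/-- A fuzzy subset: a function into `[0,1]`. -/
def IsFuzzy {S : Type*} (f : S → ℝ) : Prop := ∀ x, 0 ≤ f x ∧ f x ≤ 1

/-- A weakly regular AG-groupoid: each `a` satisfies `a = (ax)(ay)` for some `x, y`. -/
def WeaklyRegular (S : Type*) [Mul S] : Prop := ∀ a : S, ∃ x y : S, a = a * x * (a * y)

/-- The product of fuzzy subsets: `(f ∘ g)(a)` is the supremum of `min(f b, g c)` over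
factorizations `a = b * c` (the empty supremum in `ℝ` is `0`). -/
noncomputable def fuzzyProd {S : Type*} [Mul S] (f g : S → ℝ) (a : S) : ℝ :=
  sSup {v : ℝ | ∃ b c : S, a = b * c ∧ v = min (f b) (g c)}

/-- The constant fuzzy subset `1`. -/
def fuzzyOne (S : Type*) : S → ℝ := fun _ => 1

/-- An `(∈,∈∨q_k)`-fuzzy left ideal of an AG-groupoid. -/
def FuzzyLeftIdealK {S : Type*} [Mul S] (k : ℝ) (f : S → ℝ) : Prop :=
  ∀ x y : S, min (f y) ((1 - k) / 2) ≤ f (x * y)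

/-- An `(∈,∈∨q_k)`-fuzzy right ideal of an AG-groupoid. -/
def FuzzyRightIdealK {S : Type*} [Mul S] (k : ℝ) (f : S → ℝ) : Prop :=
  ∀ x y : S, min (f x) ((1 - k) / 2) ≤ f (x * y)

/-- An `(∈,∈∨q_k)`-fuzzy generalized bi-ideal of an AG-groupoid. -/
def FuzzyGenBiIdealK {S : Type*} [Mul S] (k : ℝ) (f : S → ℝ) : Prop :=
  ∀ x y z : S, min (min (f x) (f z)) ((1 - k) / 2) ≤ f (x * y * z)

/-- An `(∈,∈∨q_k)`-fuzzy bi-ideal of an AG-groupoid. -/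
def FuzzyBiIdealK {S : Type*} [Mul S] (k : ℝ) (f : S → ℝ) : Prop :=
  (∀ x y : S, min (min (f x) (f y)) ((1 - k) / 2) ≤ f (x * y)) ∧
  FuzzyGenBiIdealK k f

/-- An `(∈,∈∨q_k)`-fuzzy quasi-ideal of an AG-groupoid. -/
def FuzzyQuasiIdealK {S : Type*} [Mul S] (k : ℝ) (f : S → ℝ) : Prop :=
  ∀ x : S,
    min (min (fuzzyProd f (fuzzyOne S) x) (fuzzyProd (fuzzyOne S) f x)) ((1 - k) / 2) ≤ f x

/-- `f_k`. -/
noncomputable def subK {S : Type*} (k : ℝ) (f : S → ℝ) : S → ℝ := fun a => min (f a) ((1 - k) / 2)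

/-- `f ∧_k g`. -/
noncomputable def andK {S : Type*} (k : ℝ) (f g : S → ℝ) : S → ℝ :=
  fun a => min (min (f a) (g a)) ((1 - k) / 2)

/-- `f ∘_k g`. -/
noncomputable def prodK {S : Type*} [Mul S] (k : ℝ) (f g : S → ℝ) : S → ℝ :=
  fun a => min (fuzzyProd f g a) ((1 - k) / 2)

/-- A regular AG-groupoid: each `a` satisfies `a = (ax)a` for some `x`. -/
def RegularAG (S : Type*) [Mul S] : Prop := ∀ a : S, ∃ x : S, a = a * x * a

/-- An intra-regular AG-groupoid: each `a` satisfies `a = (x(aa))y` for some `x, y`. -/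
def IntraRegularAG (S : Type*) [Mul S] : Prop :=
  ∀ a : S, ∃ x y : S, a = x * (a * a) * y

theorem ag_key {S : Type*} [Mul S] (hS : LeftInvertive S)
    (e : S) (he : ∀ x : S, e * x = x) (hwr : WeaklyRegular S) (a : S) :
    (∃ x, a = a * x * a) ∧ ∃ w u, a = a * w * a * a ∧ a * w * a = a * u := by
  have med : ∀ a b c d : S, (a * b) * (c * d) = (a * c) * (b * d) := by
    intro a b c d
    rw [hS a b (c * d), hS c d b, hS (b * d) c a]
  have lc : ∀ a b c : S, a * (b * c) = b * (a * c) := by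
    intro a b c
    have h := med e a b c
    rwa [he, he] at h
  have sq : ∀ u : S, (a * a) * u = a * ((u * e) * a) := by
    intro u
    rw [lc a (u * e) a, hS u e (a * a), hS (a * a) e u] 
    rw [hS u e (a * a), hS a a u, hS (a * a) e u, hS u e (a * a)]
    have h1 : (a * a) * e = a * a := by rw [hS a a e, he]
    rw [h1, hS a a u]
  obtain ⟨x, y, hxy⟩ := hwr a
  have ht : a = (a * a) * (x * y) := by rw [← med]; exact hxy
  generalize x * y = t at ht
  have mv : ∀ p : S, p * a = (a * a) * (p * t) := by
    intro p
    conv_lhs => rw [ht]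
    rw [lc]
  refine ⟨⟨((t * t) * e) * a, ?_⟩, (t * e) * t, ((a * ((t * e) * t) * t) * e) * a, ?_, ?_⟩
  · rw [← sq, ← mv, hS t a a]; exact ht
  · calc a = a * ((t * e) * a) := by rw [← sq]; exact ht
      _ = a * ((a * a) * ((t * e) * t)) := by rw [← mv]
      _ = _ := by rw [lc a (a * a), hS (a * ((t * e) * t)) a a]
  · rw [← sq, ← mv]

theorem le_fuzzyProd {S : Type*} [Mul S] {f g : S → ℝ} (hf : ∀ x, f x ≤ 1) {v : ℝ}
    (b c : S) (h1 : v ≤ f b) (h2 : v ≤ g c) : v ≤ fuzzyProd f g (b * c) := by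
  refine le_trans (le_min h1 h2) (le_csSup ⟨1, ?_⟩ ⟨b, c, rfl, rfl⟩)
  rintro _ ⟨b, c, -, rfl⟩
  exact (min_le_left _ _).trans (hf b)

/-- for a weakly regular AG-groupoid `S` with left identity, the following
are equivalent: (i) `S` is regular; (ii) `f ∧_k g ≤ f ∘_k g` for every
`(∈,∈∨q_k)`-fuzzy quasi-ideal `f` and every `(∈,∈∨q_k)`-fuzzy left ideal `g`;
(iii) the same for every `(∈,∈∨q_k)`-fuzzy bi-ideal `f`; (iv) the same for every
`(∈,∈∨q_k)`-fuzzy generalized bi-ideal `f`. -/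
theorem regular_tfae_andK_le_prodK {S : Type*} [Mul S] (hS : LeftInvertive S)
    (k : ℝ) (hk0 : 0 ≤ k) (hk1 : k < 1)
    (e : S) (he : ∀ x : S, e * x = x) (hwr : WeaklyRegular S) :
    (RegularAG S ↔
      ∀ f g : S → ℝ, IsFuzzy f → IsFuzzy g →
        FuzzyQuasiIdealK k f → FuzzyLeftIdealK k g →
        ∀ a : S, andK k f g a ≤ prodK k f g a) ∧
    (RegularAG S ↔
      ∀ f g : S → ℝ, IsFuzzy f → IsFuzzy g →
        FuzzyBiIdealK k f → FuzzyLeftIdealK k g →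
        ∀ a : S, andK k f g a ≤ prodK k f g a) ∧
    (RegularAG S ↔
      ∀ f g : S → ℝ, IsFuzzy f → IsFuzzy g →
        FuzzyGenBiIdealK k f → FuzzyLeftIdealK k g →
        ∀ a : S, andK k f g a ≤ prodK k f g a) := by
  have hreg : RegularAG S := fun a => (ag_key hS e he hwr a).1
  have main : ∀ f g : S → ℝ, IsFuzzy f →
      (∀ a w u : S, a * w * a = a * u → min (f a) ((1 - k) / 2) ≤ f (a * w * a)) →
      ∀ a : S, andK k f g a ≤ prodK k f g a := by
    intro f g hf h a
    obtain ⟨w, u, h1, h2⟩ := (ag_key hS e he hwr a).2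
    have h3 := h a w u h2
    refine le_min ?_ (min_le_right _ _)
    have h4 := le_fuzzyProd (f := f) (g := g) (v := andK k f g a) (fun x => (hf x).2)
      (a * w * a) a
      (le_trans (le_min ((min_le_left _ _).trans (min_le_left _ _)) (min_le_right _ _)) h3)
      ((min_le_left _ _).trans (min_le_right _ _))
    rwa [← h1] at h4
  have gen : ∀ f g : S → ℝ, IsFuzzy f → FuzzyGenBiIdealK k f →
      ∀ a : S, andK k f g a ≤ prodK k f g a := by
    intro f g hf h
    refine main f g hf fun a w u _ => ?_
    have := h a w a
    rwa [min_self] at this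
  refine ⟨⟨fun _ f g hf _ hq _ => main f g hf fun a w u hu => ?_, fun _ => hreg⟩,
    ⟨fun _ f g hf _ hq _ => gen f g hf hq.2, fun _ => hreg⟩,
    ⟨fun _ f g hf _ hq _ => gen f g hf hq, fun _ => hreg⟩⟩
  refine le_trans (le_min (le_min ?_ ?_) (min_le_right _ _)) (hq (a * w * a))
  · rw [hu]
    exact (min_le_left _ _).trans
      (le_fuzzyProd (fun x => (hf x).2) a u le_rfl (hf a).2)
  · exact (min_le_left _ _).trans
      (le_fuzzyProd (fun _ => le_rfl) (a * w) a (hf a).2 le_rfl)
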